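/- Let F : ℝⁿ → ℝⁿ be differentiable with Jacobian J Lipschitz continuous on an open convex set containing all terms of a sequence (x^k). Define s^k = x^{k+1} − x^k and y^k = F(x^{k+1}) − F(x^k), and suppose for all k ≥ k₀: s^k ≠ 0, (s^{k−1})ᵀ y^{k−1} ≠ 0, and x^{k+1} = x^k − (1/κ_k) F(x^k) where κ_k = (s^{k−1})ᵀ y^{k−1} / ‖s^{k−1}‖². Assume x^k → x_*, and s^k/‖s^k‖ → s for some s ∈ ℝⁿ (so ‖s‖ = 1). Then J(x_*) s = (sᵀ J(x_*) s) s; that is, s is an eigenvector of J(x_*) with eigenvalue κ_* = sᵀ J(x_*) s. -/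

import Mathlib

open Filter Topology
open scoped RealInnerProductSpace

/-!
Write `u_k = s^k / ‖s^k‖`. The iteration says `F(x^k) = -κ_k s^k`, so
`v_k = (F(x^{k+1}) - F(x^k)) / ‖s^k‖` differs from `κ_k u_k` by a multiple of `u_{k+1}`. With the
orthogonal projection `P_k z = z - ⟪u_{k+1}, z⟫ u_{k+1}` this gives `P_k v_k = κ_k P_k u_k`. Since
`u_k` and `u_{k+1}` both tend to the unit vector `s`, `P_k u_k → s - ⟪s, s⟫ s = 0`; the coefficients
`κ_k` are bounded because `y^k = O(s^k)`, so the right side tends to `0`. The left side tends to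
`J(x_*) s - ⟪s, J(x_*) s⟫ s` because `v_k → J(x_*) s`.

The limit of `v_k` comes from strict differentiability of `F` at `x_*` relative to `U`, that is,
along the filter `𝓝[U] x_* ×ˢ 𝓝[U] x_*`. As `x_*` may lie on the boundary of `U`, one first has to
see that `J(z) → J(x_*)` as `z → x_*` within `U`: uniform continuity gives `J` some limit (in the
completed codomain), this limit is a derivative of `F` at `x_*` within `U`, and such a derivative is
unique because `U` is convex and open.
-/

open Asymptotics

section Derivative

variable {E G : Type*} [NormedAddCommGroup E] [NormedSpace ℝ E] [NormedAddCommGroup G]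
  [NormedSpace ℝ G] {f : E → G} {U : Set E} {p : E} {A : E →L[ℝ] G}

theorem tendsto_fderiv_nhdsWithin_of_uniformContinuousOn_of_completeSpace [CompleteSpace G]
    (hUopen : IsOpen U) (hUconv : Convex ℝ U) (hf : DiffContOnCl ℝ f U)
    (hf' : UniformContinuousOn (fderiv ℝ f) U) (hp : HasFDerivWithinAt f A U p) :
    Tendsto (fderiv ℝ f) (𝓝[U] p) (𝓝 A) := by
  obtain hbot | hne := eq_or_neBot (𝓝[U] p)
  · simp only [hbot, tendsto_bot]
  have hpU : p ∈ closure U := mem_closure_iff_nhdsWithin_neBot.2 hne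
  have hcauchy : Cauchy (map (fderiv ℝ f) (𝓝[U] p)) :=
    (cauchy_nhds.mono' hne inf_le_left).map_of_le hf' inf_le_right
  obtain ⟨B, hB⟩ : ∃ B, Tendsto (fderiv ℝ f) (𝓝[U] p) (𝓝 B) := CompleteSpace.complete hcauchy
  have hpB : HasFDerivWithinAt f B (closure U) p :=
    hasFDerivWithinAt_closure_of_tendsto_fderiv hf.differentiableOn hUconv hUopen
      (fun z hz => (hf.continuousOn z hz).mono subset_closure) hB
  have hunique : UniqueDiffWithinAt ℝ U p :=
    uniqueDiffWithinAt_convex hUconv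
      (hUopen.interior_eq.symm ▸ closure_nonempty_iff.1 ⟨p, hpU⟩) hpU
  rwa [hunique.eq hp (hpB.mono subset_closure)]

theorem tendsto_fderiv_nhdsWithin_of_uniformContinuousOn
    (hUopen : IsOpen U) (hUconv : Convex ℝ U) (hf : DiffContOnCl ℝ f U)
    (hf' : UniformContinuousOn (fderiv ℝ f) U) (hp : HasFDerivWithinAt f A U p) :
    Tendsto (fderiv ℝ f) (𝓝[U] p) (𝓝 A) := by
  let ι : G →L[ℝ] UniformSpace.Completion G := UniformSpace.Completion.toComplL
  let Φ : (E →L[ℝ] G) →ₗᵢ[ℝ] E →L[ℝ] UniformSpace.Completion G :=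
    UniformSpace.Completion.toComplₗᵢ.postcomp
  have hfderiv : Set.EqOn (Φ ∘ fderiv ℝ f) (fderiv ℝ (ι ∘ f)) U := fun z hz =>
    (ι.hasFDerivAt.comp z (hf.differentiableAt hUopen hz).hasFDerivAt).fderiv.symm
  have hcompl : Tendsto (fderiv ℝ (ι ∘ f)) (𝓝[U] p) (𝓝 (Φ A)) :=
    tendsto_fderiv_nhdsWithin_of_uniformContinuousOn_of_completeSpace hUopen hUconv
      (ι.differentiable.comp_diffContOnCl hf)
      ((Φ.isometry.uniformContinuous.comp_uniformContinuousOn hf').congr hfderiv)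
      (ι.hasFDerivAt.comp_hasFDerivWithinAt p hp)
  exact Φ.isometry.isEmbedding.tendsto_nhds_iff.2
    (hcompl.congr' (hfderiv.symm.eventuallyEq_of_mem self_mem_nhdsWithin))

theorem hasFDerivAtFilter_prod_nhdsWithin_of_tendsto {f' : E → E →L[ℝ] G} (hUconv : Convex ℝ U)
    (hf : ∀ z ∈ U, HasFDerivWithinAt f (f' z) U z) (hf' : Tendsto f' (𝓝[U] p) (𝓝 A)) :
    HasFDerivAtFilter f A (𝓝[U] p ×ˢ 𝓝[U] p) := by
  refine .of_isLittleO (isLittleO_iff.2 fun ε hε => ?_)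
  obtain ⟨δ, hδ, hclose⟩ := Metric.mem_nhdsWithin_iff.1 (hf' (Metric.closedBall_mem_nhds A hε))
  have hmem : Metric.ball p δ ∩ U ∈ 𝓝[U] p :=
    inter_mem (mem_nhdsWithin_of_mem_nhds (Metric.ball_mem_nhds p hδ)) self_mem_nhdsWithin
  filter_upwards [prod_mem_prod hmem hmem] with q ⟨hq₁, hq₂⟩
  exact ((convex_ball p δ).inter hUconv).norm_image_sub_le_of_norm_hasFDerivWithin_le'
    (fun z hz => (hf z hz.2).mono Set.inter_subset_right)
    (fun z hz => mem_closedBall_iff_norm.1 (hclose hz)) hq₂ hq₁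

theorem hasFDerivAtFilter_prod_nhdsWithin_of_uniformContinuousOn
    (hUopen : IsOpen U) (hUconv : Convex ℝ U) (hf : DiffContOnCl ℝ f U)
    (hf' : UniformContinuousOn (fderiv ℝ f) U) (hp : HasFDerivWithinAt f A U p) :
    HasFDerivAtFilter f A (𝓝[U] p ×ˢ 𝓝[U] p) :=
  hasFDerivAtFilter_prod_nhdsWithin_of_tendsto hUconv
    (fun _ hz => (hf.differentiableAt hUopen hz).hasFDerivAt.hasFDerivWithinAt)
    (tendsto_fderiv_nhdsWithin_of_uniformContinuousOn hUopen hUconv hf hf' hp)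

theorem tendsto_inv_norm_smul_of_isLittleO {ι : Type*} {l : Filter ι} {s : ι → E} {y : ι → G}
    {sLim : E} (hy : (fun i => y i - A (s i)) =o[l] s)
    (hs : Tendsto (fun i => ‖s i‖⁻¹ • s i) l (𝓝 sLim)) :
    Tendsto (fun i => ‖s i‖⁻¹ • y i) l (𝓝 (A sLim)) := by
  have herror : Tendsto (fun i => ‖s i‖⁻¹ • (y i - A (s i))) l (𝓝 0) := by
    rw [tendsto_zero_iff_norm_tendsto_zero]
    simpa only [norm_smul, norm_inv, norm_norm, div_eq_inv_mul] using
      hy.norm_norm.tendsto_div_nhds_zero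
  have hlinear : Tendsto (fun i => A (‖s i‖⁻¹ • s i)) l (𝓝 (A sLim)) :=
    (A.continuous.tendsto sLim).comp hs
  simpa only [map_smul, ← smul_add, sub_add_cancel, zero_add] using herror.add hlinear

end Derivative

theorem eq_neg_smul_sub_of_eq_sub_inv_smul {K V : Type*} [DivisionRing K] [AddCommGroup V]
    [Module K V] {a b z : V} {c : K} (h : b = a - c⁻¹ • z) (hne : b - a ≠ 0) :
    z = -(c • (b - a)) := by
  have hc : c ≠ 0 := by
    rintro rfl
    simp [h] at hne
  rw [h, sub_sub_cancel_left, smul_neg, smul_inv_smul₀ hc, neg_neg]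

section InnerProduct

variable {E : Type*} [NormedAddCommGroup E] [InnerProductSpace ℝ E]

theorem isBigO_inner_div_norm_sq {ι : Type*} {l : Filter ι} {s y : ι → E} (hy : y =O[l] s) :
    (fun i => ⟪s i, y i⟫ / ‖s i‖ ^ 2) =O[l] fun _ => (1 : ℝ) := by
  obtain ⟨C, hC, hyC⟩ := hy.exists_nonneg
  refine .of_bound C (hyC.bound.mono fun i hi => ?_)
  rw [norm_one, mul_one, norm_div, norm_pow, norm_norm]
  refine div_le_of_le_mul₀ (by positivity) hC ?_
  calc ‖⟪s i, y i⟫‖ ≤ ‖s i‖ * ‖y i‖ := norm_inner_le_norm _ _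
    _ ≤ ‖s i‖ * (C * ‖s i‖) := by gcongr
    _ = C * ‖s i‖ ^ 2 := by ring

theorem sub_inner_smul_eq_of_sub_mem_span_singleton {u v w : E} (hu : ‖u‖ = 1)
    (h : v - w ∈ Submodule.span ℝ {u}) : v - ⟪u, v⟫ • u = w - ⟪u, w⟫ • u := by
  obtain ⟨r, hr⟩ := Submodule.mem_span_singleton.1 h
  obtain rfl : v = r • u + w := eq_add_of_sub_eq hr.symm
  rw [inner_add_right, real_inner_smul_right, real_inner_self_eq_norm_sq, hu]
  module

theorem eq_inner_smul_of_tendsto_of_sub_smul_mem_span {ι : Type*} {l : Filter ι} [l.NeBot]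
    {u u' v : ι → E} {κ : ι → ℝ} {s w : E} (hu : Tendsto u l (𝓝 s)) (hu' : Tendsto u' l (𝓝 s))
    (hv : Tendsto v l (𝓝 w)) (hunit : ∀ᶠ i in l, ‖u' i‖ = 1) (hκ : κ =O[l] fun _ => (1 : ℝ))
    (hspan : ∀ᶠ i in l, v i - κ i • u i ∈ Submodule.span ℝ {u' i}) :
    w = ⟪s, w⟫ • s := by
  have hs : ‖s‖ = 1 :=
    tendsto_nhds_unique hu'.norm (tendsto_const_nhds.congr' (hunit.mono fun _ h => h.symm))
  have hproj {z : ι → E} {z₀ : E} (hz : Tendsto z l (𝓝 z₀)) :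
      Tendsto (fun i => z i - ⟪u' i, z i⟫ • u' i) l (𝓝 (z₀ - ⟪s, z₀⟫ • s)) :=
    hz.sub ((hu'.inner hz).smul hu')
  have hzero : Tendsto (fun i => u i - ⟪u' i, u i⟫ • u' i) l (𝓝 0) := by
    simpa only [real_inner_self_eq_norm_sq, hs, one_pow, one_smul, sub_self] using hproj hu
  have hbdd : Tendsto (fun i => κ i • (u i - ⟪u' i, u i⟫ • u' i)) l (𝓝 0) := by
    simpa only [smul_eq_mul, mul_one, isLittleO_one_iff] using
      hκ.smul_isLittleO ((isLittleO_one_iff ℝ).2 hzero)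
  refine sub_eq_zero.1 (tendsto_nhds_unique (hproj hv) (hbdd.congr' ?_))
  filter_upwards [hunit, hspan] with i hi hvi
  rw [sub_inner_smul_eq_of_sub_mem_span_singleton hi hvi, real_inner_smul_right]
  module

variable {F : E → E} {U : Set E} {x s : ℕ → E} {κ : ℕ → ℝ} {xstar : E} {A : E →L[ℝ] E}

theorem isBigO_one_of_eq_inner_secant_div_norm_sq {y : ℕ → E}
    (hF : HasFDerivAtFilter F A (𝓝[U] xstar ×ˢ 𝓝[U] xstar)) (hx : Tendsto x atTop (𝓝[U] xstar))
    (hs : ∀ k, s k = x (k + 1) - x k) (hy : ∀ k, y k = F (x (k + 1)) - F (x k))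
    (hκ : ∀ᶠ k in atTop, κ k = ⟪s (k - 1), y (k - 1)⟫ / ‖s (k - 1)‖ ^ 2) :
    κ =O[atTop] fun _ => (1 : ℝ) := by
  have hyO : y =O[atTop] s := by
    rw [funext hy, funext hs]
    exact hF.isBigO_sub.comp_tendsto ((hx.comp (tendsto_add_atTop_nat 1)).prodMk hx)
  exact ((isBigO_inner_div_norm_sq hyO).comp_tendsto (tendsto_sub_atTop_nat 1)).congr'
    (hκ.mono fun _ hk => hk.symm) .rfl

theorem secant_accel_stmt15_general (hF : HasFDerivAtFilter F A (𝓝[U] xstar ×ˢ 𝓝[U] xstar))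
    (hx : Tendsto x atTop (𝓝[U] xstar)) (hs : ∀ k, s k = x (k + 1) - x k)
    (hsne : ∀ᶠ k in atTop, s k ≠ 0) (hκ : κ =O[atTop] fun _ => (1 : ℝ))
    (hiter : ∀ᶠ k in atTop, x (k + 1) = x k - (κ k)⁻¹ • F (x k)) {sLim : E}
    (hslim : Tendsto (fun k => ‖s k‖⁻¹ • s k) atTop (𝓝 sLim)) :
    A sLim = ⟪sLim, A sLim⟫ • sLim := by
  have hshift : Tendsto (fun k => k + 1) atTop atTop := tendsto_add_atTop_nat 1
  have hsecant : (fun k => F (x (k + 1)) - F (x k) - A (s k)) =o[atTop] s := by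
    rw [funext hs]
    exact hF.isLittleO.comp_tendsto ((hx.comp hshift).prodMk hx)
  have hresidual : ∀ᶠ k in atTop, F (x k) = -(κ k • s k) := by
    filter_upwards [hiter, hsne] with k hk hne
    rw [hs] at hne ⊢
    exact eq_neg_smul_sub_of_eq_sub_inv_smul hk hne
  refine eq_inner_smul_of_tendsto_of_sub_smul_mem_span hslim (hslim.comp hshift)
    (tendsto_inv_norm_smul_of_isLittleO hsecant hslim)
    ((hshift.eventually hsne).mono fun k hk => norm_smul_inv_norm (𝕜 := ℝ) hk) hκ ?_
  filter_upwards [hresidual, hshift.eventually hresidual, hshift.eventually hsne] with k hk hk' hne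
  refine Submodule.mem_span_singleton.2 ⟨-(‖s k‖⁻¹ * κ (k + 1) * ‖s (k + 1)‖), ?_⟩
  simp only [Function.comp_apply]
  rw [hk, hk', smul_smul, neg_mul, mul_assoc, mul_inv_cancel₀ (norm_ne_zero_iff.2 hne)]
  module

end InnerProduct

/-- for the spectral residual iteration, under the hypotheses of
Theorem 3.5 (without invertibility of `J(x_*)`), the limit direction `s` is an
eigenvector of `J(x_*)` with eigenvalue `sᵀ J(x_*) s`. -/
theorem secant_accel_stmt15 {n : ℕ}
    (F : EuclideanSpace ℝ (Fin n) → EuclideanSpace ℝ (Fin n))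
    (hF : Differentiable ℝ F)
    (U : Set (EuclideanSpace ℝ (Fin n))) (hUopen : IsOpen U) (hUconv : Convex ℝ U)
    (L : ℝ) (hL : 0 < L)
    (hLip : ∀ a ∈ U, ∀ b ∈ U, ‖fderiv ℝ F a - fderiv ℝ F b‖ ≤ L * ‖a - b‖)
    (x : ℕ → EuclideanSpace ℝ (Fin n)) (hxU : ∀ k, x k ∈ U)
    (s y : ℕ → EuclideanSpace ℝ (Fin n)) (κ : ℕ → ℝ) (k₀ : ℕ) (hk₀ : 1 ≤ k₀)
    (hs : ∀ k, s k = x (k + 1) - x k)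
    (hy : ∀ k, y k = F (x (k + 1)) - F (x k))
    (hsne : ∀ k, k₀ ≤ k → s k ≠ 0)
    (hsy : ∀ k, k₀ ≤ k → ⟪s (k - 1), y (k - 1)⟫ ≠ 0)
    (hκ : ∀ k, k₀ ≤ k → κ k = ⟪s (k - 1), y (k - 1)⟫ / ‖s (k - 1)‖ ^ 2)
    (hiter : ∀ k, k₀ ≤ k → x (k + 1) = x k - (κ k)⁻¹ • F (x k))
    (xstar : EuclideanSpace ℝ (Fin n))
    (hxlim : Tendsto x atTop (𝓝 xstar))
    (sLim : EuclideanSpace ℝ (Fin n))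
    (hslim : Tendsto (fun k => (‖s k‖)⁻¹ • s k) atTop (𝓝 sLim)) :
    fderiv ℝ F xstar sLim = ⟪sLim, fderiv ℝ F xstar sLim⟫ • sLim := by
  have hx : Tendsto x atTop (𝓝[U] xstar) :=
    tendsto_nhdsWithin_iff.2 ⟨hxlim, .of_forall hxU⟩
  have hJ : UniformContinuousOn (fderiv ℝ F) U :=
    (LipschitzOnWith.of_dist_le' (by simpa only [dist_eq_norm] using hLip)).uniformContinuousOn
  have hstrict : HasFDerivAtFilter F (fderiv ℝ F xstar) (𝓝[U] xstar ×ˢ 𝓝[U] xstar) :=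
    hasFDerivAtFilter_prod_nhdsWithin_of_uniformContinuousOn hUopen hUconv hF.diffContOnCl hJ
      (hF xstar).hasFDerivAt.hasFDerivWithinAt
  have hκO : κ =O[atTop] fun _ => (1 : ℝ) :=
    isBigO_one_of_eq_inner_secant_div_norm_sq hstrict hx hs hy (eventually_atTop.2 ⟨k₀, hκ⟩)
  exact secant_accel_stmt15_general hstrict hx hs (eventually_atTop.2 ⟨k₀, hsne⟩) hκO
    (eventually_atTop.2 ⟨k₀, hiter⟩) hslim
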